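/- arXiv:2402.13285 — 2 statements merged into one kernel-verified Lean document; each statement's English description precedes it below -/
import Mathlib

section
/- General disintegrated PAC-Bayes bound (Rivasplata et al.): For any probability measure D on Z, any measurable function φ : H × Z^m → ℝ, any prior density P on H, any posterior Markov kernel S ↦ Q_S, and any δ ∈ (0,1], with probability at least 1−δ over S ∼ D^m and h ∼ Q_S one has φ(h,S) ≤ ln(Q_S(h)/P(h)) + ln[(1/δ) · E_{V∼D^m} E_{g∼P} e^{φ(g,V)}]. -/
open MeasureTheory ProbabilityTheory

/-!
Markov's inequality after a change of measure. Let `E` be the double expectation. Where the bound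
fails, `(E / δ) * Q_S(h) < P(h) * e^φ(h,S)`; integrating this over the failure event against the
reference measure and `S` gives `(E / δ) * Pr[failure] ≤ E`, hence `Pr[failure] ≤ δ`.

Since `Q` may be any density of the kernel, jointly measurable or not, the failure event need not
be measurable. It is enough to bound the probability of its measurable subsets.
-/

section Measure

variable {α : Type*} [MeasurableSpace α] {μ : Measure α}

theorem measure_univ_tsub_le_of_forall_disjoint {s : Set α} {ε : ENNReal}
    (h : ∀ B, MeasurableSet B → Disjoint B s → μ B ≤ ε) : μ Set.univ - ε ≤ μ s := by
  have hT : MeasurableSet (toMeasurable μ s) := measurableSet_toMeasurable μ s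
  have hdisj : Disjoint (toMeasurable μ s)ᶜ s :=
    disjoint_compl_left.mono_right (subset_toMeasurable μ s)
  rw [tsub_le_iff_right, ← measure_add_measure_compl hT, measure_toMeasurable]
  gcongr
  exact h _ hT.compl hdisj

theorem lintegral_ne_zero_of_forall_ne_zero [NeZero μ] {f : α → ENNReal} (hf : AEMeasurable f μ)
    (hf0 : ∀ x, f x ≠ 0) : ∫⁻ x, f x ∂μ ≠ 0 := by
  rw [Ne, lintegral_eq_zero_iff' hf]
  exact fun h => h.exists.elim hf0

theorem withDensity_ne_zero_of_forall_ne_zero [NeZero μ] {f : α → ENNReal}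
    (hf : AEMeasurable f μ) (hf0 : ∀ x, f x ≠ 0) : μ.withDensity f ≠ 0 := by
  rw [Ne, withDensity_eq_zero_iff hf]
  exact fun h => h.exists.elim hf0

theorem lintegral_lintegral_ne_zero_of_forall_ne_zero {β : Type*} [MeasurableSpace β]
    {ν : Measure β} [NeZero μ] [NeZero ν] [SFinite ν] {f : α → β → ENNReal}
    (hf : Measurable (Function.uncurry f)) (hf0 : ∀ x y, f x y ≠ 0) :
    ∫⁻ x, ∫⁻ y, f x y ∂ν ∂μ ≠ 0 :=
  lintegral_ne_zero_of_forall_ne_zero hf.lintegral_prod_right.aemeasurable fun x =>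
    lintegral_ne_zero_of_forall_ne_zero hf.of_uncurry_left.aemeasurable (hf0 x)

theorem mul_withDensity_apply_le_setLIntegral_withDensity {p q f : α → ENNReal} {c : ENNReal}
    {B : Set α} (hp : Measurable p) (hf : Measurable f) (hB : MeasurableSet B)
    (hle : ∀ x ∈ B, c * q x ≤ p x * f x) :
    c * μ.withDensity q B ≤ ∫⁻ x in B, f x ∂μ.withDensity p :=
  calc c * μ.withDensity q B
      = c * ∫⁻ x in B, q x ∂μ := by rw [withDensity_apply q hB]
    _ ≤ ∫⁻ x in B, c * q x ∂μ := lintegral_const_mul_le c q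
    _ ≤ ∫⁻ x in B, p x * f x ∂μ := setLIntegral_mono' hB hle
    _ = ∫⁻ x in B, f x ∂μ.withDensity p :=
      (setLIntegral_withDensity_eq_setLIntegral_mul μ hp hf hB).symm

end Measure

section Kernel

variable {Ω H : Type*} [MeasurableSpace Ω] [MeasurableSpace H] {ρ : Measure Ω} [SFinite ρ]
  {lam : Measure H} {κ : Kernel Ω H} [IsSFiniteKernel κ] {p : H → ENNReal} {q f : Ω → H → ENNReal}
  {B : Set (Ω × H)}

theorem mul_compProd_apply_le_lintegral_lintegral_withDensity {c : ENNReal}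
    (hκ : ∀ S, κ S = lam.withDensity (q S)) (hp : Measurable p) (hf : ∀ S, Measurable (f S))
    (hB : MeasurableSet B) (hle : ∀ S h, (S, h) ∈ B → c * q S h ≤ p h * f S h) :
    c * (ρ ⊗ₘ κ) B ≤ ∫⁻ S, ∫⁻ h, f S h ∂lam.withDensity p ∂ρ := by
  have section_le (S : Ω) :
      c * κ S (Prod.mk S ⁻¹' B) ≤ ∫⁻ h, f S h ∂lam.withDensity p := by
    rw [hκ]
    exact (mul_withDensity_apply_le_setLIntegral_withDensity hp (hf S)
      (measurable_prodMk_left hB) (hle S)).trans (setLIntegral_le_lintegral _ _)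
  calc c * (ρ ⊗ₘ κ) B
      = c * ∫⁻ S, κ S (Prod.mk S ⁻¹' B) ∂ρ := by rw [Measure.compProd_apply hB]
    _ ≤ ∫⁻ S, c * κ S (Prod.mk S ⁻¹' B) ∂ρ := lintegral_const_mul_le c _
    _ ≤ ∫⁻ S, ∫⁻ h, f S h ∂lam.withDensity p ∂ρ := lintegral_mono section_le

theorem compProd_apply_le_of_forall_div_mul_lt {δ : ENNReal} (hδ0 : δ ≠ 0) (hδtop : δ ≠ ⊤)
    (hκ : ∀ S, κ S = lam.withDensity (q S)) (hq0 : ∀ S h, q S h ≠ 0)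
    (hp : Measurable p) (hp0 : ∀ h, p h ≠ 0) (hptop : ∀ h, p h ≠ ⊤)
    (hf : ∀ S, Measurable (f S)) (hE0 : ∫⁻ S, ∫⁻ h, f S h ∂lam.withDensity p ∂ρ ≠ 0)
    (hB : MeasurableSet B)
    (hlt : ∀ S h, (S, h) ∈ B →
      q S h / p h * (δ⁻¹ * ∫⁻ V, ∫⁻ g, f V g ∂lam.withDensity p ∂ρ) < f S h) :
    (ρ ⊗ₘ κ) B ≤ δ := by
  set E := ∫⁻ V, ∫⁻ g, f V g ∂lam.withDensity p ∂ρ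
  by_cases hEtop : E = ⊤
  · have hBempty : B = ∅ := by
      refine Set.eq_empty_of_forall_notMem fun ⟨S, h⟩ hSh => not_top_lt (a := f S h) ?_
      have hratio : q S h / p h ≠ 0 := ENNReal.div_ne_zero.2 ⟨hq0 S h, hptop h⟩
      simpa only [hEtop, ENNReal.mul_top (ENNReal.inv_ne_zero.2 hδtop), ENNReal.mul_top hratio]
        using hlt S h hSh
    rw [hBempty, measure_empty]
    exact zero_le
  have hle (S : Ω) (h : H) (hSh : (S, h) ∈ B) : δ⁻¹ * E * q S h ≤ p h * f S h :=
    calc δ⁻¹ * E * q S h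
        = p h * (q S h / p h * (δ⁻¹ * E)) := by
          rw [← mul_assoc, ENNReal.mul_div_cancel (hp0 h) (hptop h), mul_comm]
      _ ≤ p h * f S h := by gcongr; exact (hlt S h hSh).le
  have hmarkov : δ⁻¹ * E * (ρ ⊗ₘ κ) B ≤ E :=
    mul_compProd_apply_le_lintegral_lintegral_withDensity hκ hp hf hB hle
  have hcancel : E * (δ⁻¹ * (ρ ⊗ₘ κ) B) ≤ E * 1 := by
    rwa [mul_one, ← mul_assoc, mul_comm E]
  rw [ENNReal.mul_le_mul_iff_right hE0 hEtop, mul_comm, ← div_eq_mul_inv] at hcancel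
  simpa using (ENNReal.div_le_iff hδ0 hδtop).1 hcancel

end Kernel

theorem coe_le_coe_log_add_log_iff {a r : ℝ} (hr : 0 < r) {c : ENNReal} :
    (a : EReal) ≤ (Real.log r : EReal) + ENNReal.log c ↔
      ENNReal.ofReal (Real.exp a) ≤ ENNReal.ofReal r * c := by
  have hlog : (a : EReal) = ENNReal.log (ENNReal.ofReal (Real.exp a)) := by
    rw [ENNReal.log_ofReal_of_pos (Real.exp_pos a), Real.log_exp]
  rw [hlog, ← ENNReal.log_ofReal_of_pos hr, ← ENNReal.log_mul_add, ENNReal.log_le_log_iff]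

theorem rivasplata_general_disintegrated_bound_general
    {Ω H : Type*} [MeasurableSpace Ω] [MeasurableSpace H]
    (ρ : Measure Ω) [IsProbabilityMeasure ρ] (lam : Measure H) [SFinite lam]
    (P : H → ℝ) (hPpos : ∀ h, 0 < P h) (hPmeas : Measurable P)
    (Q : Ω → H → ℝ) (hQpos : ∀ S h, 0 < Q S h)
    (κ : Kernel Ω H) [IsMarkovKernel κ]
    (hκ : ∀ S, κ S = lam.withDensity fun h => ENNReal.ofReal (Q S h))
    (φ : H → Ω → ℝ) (hφ : Measurable (Function.uncurry φ)) (δ : ℝ) (hδ : 0 < δ) :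
    1 - ENNReal.ofReal δ ≤
      (ρ ⊗ₘ κ) {x : Ω × H |
        (φ x.2 x.1 : EReal) ≤ (Real.log (Q x.1 x.2 / P x.2) : EReal)
          + ENNReal.log (ENNReal.ofReal (1 / δ) *
              ∫⁻ V, ∫⁻ g, ENNReal.ofReal (Real.exp (φ g V))
                ∂(lam.withDensity fun h => ENNReal.ofReal (P h)) ∂ρ)} := by
  have hp0 (h : H) : ENNReal.ofReal (P h) ≠ 0 := (ENNReal.ofReal_pos.2 (hPpos h)).ne'
  have hf : Measurable (Function.uncurry fun S h => ENNReal.ofReal (Real.exp (φ h S))) :=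
    (Real.measurable_exp.comp (hφ.comp measurable_swap)).ennreal_ofReal
  have : NeZero lam := by
    obtain ⟨S⟩ := nonempty_of_isProbabilityMeasure ρ
    refine ⟨fun hlam => IsProbabilityMeasure.ne_zero (κ S) ?_⟩
    rw [hκ, hlam, withDensity_zero_left]
  have : NeZero (lam.withDensity fun h => ENNReal.ofReal (P h)) :=
    ⟨withDensity_ne_zero_of_forall_ne_zero hPmeas.ennreal_ofReal.aemeasurable hp0⟩
  have hE0 := lintegral_lintegral_ne_zero_of_forall_ne_zero (μ := ρ)
    (ν := lam.withDensity fun h => ENNReal.ofReal (P h)) hf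
    fun S h => (ENNReal.ofReal_pos.2 (Real.exp_pos (φ h S))).ne'
  rw [← measure_univ (μ := ρ ⊗ₘ κ)]
  refine measure_univ_tsub_le_of_forall_disjoint fun B hB hdisj => ?_
  refine compProd_apply_le_of_forall_div_mul_lt (ENNReal.ofReal_pos.2 hδ).ne' ENNReal.ofReal_ne_top
    hκ (fun S h => (ENNReal.ofReal_pos.2 (hQpos S h)).ne') hPmeas.ennreal_ofReal hp0
    (fun h => ENNReal.ofReal_ne_top) (fun S => hf.of_uncurry_left) hE0 hB
    fun S h hSh => ?_
  have hfail := Set.disjoint_left.1 hdisj hSh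
  rwa [Set.mem_ofPred_eq, coe_le_coe_log_add_log_iff (div_pos (hQpos S h) (hPpos h)), not_le,
    ENNReal.ofReal_div_of_pos (hPpos h), one_div, ENNReal.ofReal_inv_of_pos hδ] at hfail

/-- **General disintegrated PAC-Bayes bound (Rivasplata et al.).**
For any probability measure `D` on `Z`, any measurable `φ : H × Z^m → ℝ`, any
strictly positive prior density `P` on `H`, any posterior Markov kernel
`S ↦ Q_S` (with strictly positive densities `Q S` w.r.t. the reference measure
`lam`), and any `δ ∈ (0,1]`, with probability at least `1 − δ` over
`S ∼ D^m` and `h ∼ Q_S` one has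
`φ(h,S) ≤ ln(Q_S(h)/P(h)) + ln[(1/δ) · E_{V∼D^m} E_{g∼P} e^{φ(g,V)}]`
(the inequality being stated in `EReal` so that it is trivially true when the
double expectation is infinite). -/
theorem rivasplata_general_disintegrated_bound
    {Z H : Type*} [MeasurableSpace Z] [MeasurableSpace H]
    (m : ℕ) (hm : 0 < m)
    (D : Measure Z) [IsProbabilityMeasure D]
    (lam : Measure H) [SigmaFinite lam]
    (P : H → ℝ) (hPpos : ∀ h, 0 < P h) (hPmeas : Measurable P)
    (Pm : Measure H) [IsProbabilityMeasure Pm]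
    (hPm : Pm = lam.withDensity fun h => ENNReal.ofReal (P h))
    (Q : (Fin m → Z) → H → ℝ) (hQpos : ∀ S h, 0 < Q S h)
    (κ : Kernel (Fin m → Z) H) [IsMarkovKernel κ]
    (hκ : ∀ S, κ S = lam.withDensity fun h => ENNReal.ofReal (Q S h))
    (φ : H → (Fin m → Z) → ℝ) (hφ : Measurable (Function.uncurry φ))
    (δ : ℝ) (hδ : δ ∈ Set.Ioc (0:ℝ) 1) :
    1 - ENNReal.ofReal δ ≤
      (Measure.pi (fun _ : Fin m => D) ⊗ₘ κ)
        {p : (Fin m → Z) × H |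
          (φ p.2 p.1 : EReal) ≤ (Real.log (Q p.1 p.2 / P p.2) : EReal)
            + ENNReal.log (ENNReal.ofReal (1/δ) *
                ∫⁻ V, ∫⁻ g, ENNReal.ofReal (Real.exp (φ g V)) ∂Pm
                  ∂(Measure.pi (fun _ : Fin m => D))) } := by
  subst hPm
  exact rivasplata_general_disintegrated_bound_general _ lam P hPpos hPmeas Q hQpos κ hκ φ hφ δ hδ.1
end

section
/- Main theorem (generalization bound with an arbitrary complexity measure): Let ℓ : H × Z → ℝ be a measurable loss and φ : ℝ² → ℝ a measurable generalization-gap function. For any probability measure D on Z, any prior density P on H, any measurable parametric function μ : H × Z^m → ℝ with finite positive Gibbs normalizer, and any δ ∈ (0,1], with probability at least 1−δ over h′ ∼ P, S ∼ D^m, and h ∼ Q_S (i.e. under the product of P with the measure D^m ⊗ Q, where Q_S is the Gibbs posterior for μ), one has φ(R_D^ℓ(h), R_S^ℓ(h)) ≤ μ(h′,S) − μ(h,S) + ln(P(h′)/P(h)) + ln[(4/δ²) · E_{V∼D^m} E_{g∼P} e^{φ(R_D^ℓ(g), R_V^ℓ(g))}]. -/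
open MeasureTheory ProbabilityTheory

/-- The true risk `R_D^ℓ(h) = E_{z∼D} ℓ(h,z)`. -/
noncomputable def trueRisk {H Z : Type*} [MeasurableSpace Z]
    (D : Measure Z) (ℓ : H → Z → ℝ) (h : H) : ℝ :=
  ∫ z, ℓ h z ∂D

/-- The empirical risk `R_S^ℓ(h) = (1/m) Σ_{i=1}^m ℓ(h,z_i)`. -/
noncomputable def empRisk {H Z : Type*} {m : ℕ}
    (ℓ : H → Z → ℝ) (h : H) (S : Fin m → Z) : ℝ :=
  (∑ i, ℓ h (S i)) / m

/-!
The parametric function enters only through the ratio `q_S(h') / q_S(h)` of Gibbs densities, from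
which the normalizer cancels. Write `f(S, h) = e^{φ(R_D(h), R_S(h))}`. A change of measure shows
that `f(S, h) P(h) / q_S(h)` has mean `E_V E_{g∼P} f(V, g)` under `S ∼ D^m`, `h ∼ Q_S`, and that
`q_S(h') / P(h')` has mean `1` under `h' ∼ P`. By Markov's inequality each of the two exceeds `2/δ`
times its mean with probability at most `δ/2`; off these two events their product is at most `4/δ²`
times the product of the means, and the bound is the logarithm of this inequality.
-/

open scoped ENNReal

section MarkovInequality

variable {Ω : Type*} [MeasurableSpace Ω] {ρ : Measure Ω}

lemma measure_mul_lintegral_lt_le_inv {f : Ω → ℝ≥0∞} (hf : AEMeasurable f ρ) (c : ℝ≥0∞) :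
    ρ {x | c * ∫⁻ y, f y ∂ρ < f x} ≤ c⁻¹ := by
  rcases eq_or_ne (∫⁻ y, f y ∂ρ) 0 with hzero | hzero
  · have hf_ae : ∀ᵐ x ∂ρ, f x = 0 := (lintegral_eq_zero_iff' hf).1 hzero
    have hnull : ρ {x | c * ∫⁻ y, f y ∂ρ < f x} = 0 := by
      refine measure_eq_zero_iff_ae_notMem.2 ?_
      filter_upwards [hf_ae] with x hx
      simp [hx]
    exact hnull.trans_le zero_le
  rcases eq_or_ne (∫⁻ y, f y ∂ρ) ∞ with htop | htop
  · rcases eq_or_ne c 0 with rfl | hc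
    · simp
    · simp [htop, ENNReal.mul_top hc]
  refine ENNReal.le_inv_iff_mul_le.2 ((ENNReal.mul_le_mul_iff_left hzero htop).1 ?_)
  calc ρ {x | c * ∫⁻ y, f y ∂ρ < f x} * c * ∫⁻ y, f y ∂ρ
      = (c * ∫⁻ y, f y ∂ρ) * ρ {x | c * ∫⁻ y, f y ∂ρ < f x} := by ring
    _ ≤ (c * ∫⁻ y, f y ∂ρ) * ρ {x | c * ∫⁻ y, f y ∂ρ ≤ f x} := by
        gcongr with x
        exact le_of_lt
    _ ≤ ∫⁻ y, f y ∂ρ := mul_meas_ge_le_lintegral₀ hf _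
    _ = 1 * ∫⁻ y, f y ∂ρ := (one_mul _).symm

lemma one_sub_le_measure_mul_le_lintegral_mul_lintegral [IsProbabilityMeasure ρ]
    {f g : Ω → ℝ≥0∞} (hf : AEMeasurable f ρ) (hg : AEMeasurable g ρ) (δ : ℝ≥0∞) :
    1 - δ ≤ ρ {x | f x * g x ≤ 4 / δ ^ 2 * ((∫⁻ y, f y ∂ρ) * ∫⁻ y, g y ∂ρ)} := by
  set good := {x | f x * g x ≤ 4 / δ ^ 2 * ((∫⁻ y, f y ∂ρ) * ∫⁻ y, g y ∂ρ)}
  set badf := {x | 2 / δ * ∫⁻ y, f y ∂ρ < f x}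
  set badg := {x | 2 / δ * ∫⁻ y, g y ∂ρ < g x}
  have hsq : 4 / δ ^ 2 = 2 / δ * (2 / δ) := by
    simp only [div_eq_mul_inv, ENNReal.inv_pow]
    ring
  have hcover : Set.univ ⊆ good ∪ (badf ∪ badg) := by
    refine fun x _ ↦ or_iff_not_imp_right.2 fun hx ↦ ?_
    obtain ⟨hfx, hgx⟩ : f x ≤ 2 / δ * ∫⁻ y, f y ∂ρ ∧ g x ≤ 2 / δ * ∫⁻ y, g y ∂ρ := by
      simpa only [badf, badg, Set.mem_union, Set.mem_ofPred_eq, not_or, not_lt] using hx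
    calc f x * g x ≤ (2 / δ * ∫⁻ y, f y ∂ρ) * (2 / δ * ∫⁻ y, g y ∂ρ) := mul_le_mul' hfx hgx
      _ = 4 / δ ^ 2 * ((∫⁻ y, f y ∂ρ) * ∫⁻ y, g y ∂ρ) := by rw [hsq]; ring
  have hbad : ρ (badf ∪ badg) ≤ δ :=
    calc ρ (badf ∪ badg) ≤ ρ badf + ρ badg := measure_union_le _ _
      _ ≤ (2 / δ)⁻¹ + (2 / δ)⁻¹ :=
        add_le_add (measure_mul_lintegral_lt_le_inv hf _) (measure_mul_lintegral_lt_le_inv hg _)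
      _ = δ := by
        rw [ENNReal.inv_div (.inr ENNReal.ofNat_ne_top) (.inr two_ne_zero), ENNReal.add_halves]
  refine tsub_le_iff_right.2 ?_
  calc 1 = ρ Set.univ := measure_univ.symm
    _ ≤ ρ good + ρ (badf ∪ badg) := (measure_mono hcover).trans (measure_union_le _ _)
    _ ≤ ρ good + δ := by gcongr

end MarkovInequality

section ChangeOfMeasure

variable {Ω H : Type*} [MeasurableSpace Ω] [MeasurableSpace H] {lam π : Measure H}

lemma lintegral_mul_div_withDensity {f p q : H → ℝ≥0∞} (hf : Measurable f) (hp : Measurable p)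
    (hq : Measurable q) (hq_zero : ∀ h, q h ≠ 0) (hq_top : ∀ h, q h ≠ ∞) :
    ∫⁻ h, f h * (p h / q h) ∂(lam.withDensity q) = ∫⁻ h, f h ∂(lam.withDensity p) := by
  rw [lintegral_withDensity_eq_lintegral_mul _ hq (by fun_prop),
    lintegral_withDensity_eq_lintegral_mul _ hp hf]
  refine lintegral_congr fun h ↦ ?_
  calc q h * (f h * (p h / q h)) = f h * (q h * (p h / q h)) := by ring
    _ = p h * f h := by rw [ENNReal.mul_div_cancel (hq_zero h) (hq_top h), mul_comm]

lemma lintegral_compProd_mul_div {ν : Measure Ω} [SFinite ν] {κ : Kernel Ω H} [IsSFiniteKernel κ]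
    {f q : Ω × H → ℝ≥0∞} {p : H → ℝ≥0∞} (hf : Measurable f) (hp : Measurable p)
    (hq : Measurable q) (hq_zero : ∀ x, q x ≠ 0) (hq_top : ∀ x, q x ≠ ∞)
    (hπ : π = lam.withDensity p) (hκ : ∀ S, κ S = lam.withDensity fun h ↦ q (S, h)) :
    ∫⁻ x, f x * (p x.2 / q x) ∂(ν ⊗ₘ κ) = ∫⁻ S, ∫⁻ h, f (S, h) ∂π ∂ν := by
  rw [Measure.lintegral_compProd (by fun_prop)]
  refine lintegral_congr fun S ↦ ?_
  rw [hκ S, hπ]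
  exact lintegral_mul_div_withDensity (by fun_prop) hp (by fun_prop)
    (fun h ↦ hq_zero (S, h)) fun h ↦ hq_top (S, h)

lemma one_sub_le_measure_mul_density_ratio_le {ν : Measure Ω} [IsProbabilityMeasure ν]
    [IsProbabilityMeasure π] {κ : Kernel Ω H} [IsMarkovKernel κ]
    {f q : Ω × H → ℝ≥0∞} {p : H → ℝ≥0∞} (hf : Measurable f)
    (hp : Measurable p) (hp_zero : ∀ h, p h ≠ 0) (hp_top : ∀ h, p h ≠ ∞)
    (hq : Measurable q) (hq_zero : ∀ x, q x ≠ 0) (hq_top : ∀ x, q x ≠ ∞)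
    (hπ : π = lam.withDensity p) (hκ : ∀ S, κ S = lam.withDensity fun h ↦ q (S, h)) (δ : ℝ≥0∞) :
    1 - δ ≤ (π.prod (ν ⊗ₘ κ)) {x : H × Ω × H |
      f x.2 * (p x.2.2 / q x.2) * (q (x.2.1, x.1) / p x.1) ≤
        4 / δ ^ 2 * ∫⁻ S, ∫⁻ h, f (S, h) ∂π ∂ν} := by
  have hmean_posterior : ∫⁻ x : H × Ω × H, f x.2 * (p x.2.2 / q x.2) ∂(π.prod (ν ⊗ₘ κ)) =
      ∫⁻ S, ∫⁻ h, f (S, h) ∂π ∂ν := by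
    rw [lintegral_prod _ (by fun_prop)]
    simp only [lintegral_const, measure_univ, mul_one]
    exact lintegral_compProd_mul_div hf hp hq hq_zero hq_top hπ hκ
  have hmean_slice (S : Ω) : ∫⁻ h', q (S, h') / p h' ∂π = 1 :=
    calc ∫⁻ h', q (S, h') / p h' ∂π = ∫⁻ h', 1 * (q (S, h') / p h') ∂(lam.withDensity p) := by
          simp only [hπ, one_mul]
      _ = ∫⁻ _, 1 ∂(κ S) := by
          rw [hκ S]
          exact lintegral_mul_div_withDensity measurable_const (by fun_prop) hp hp_zero hp_top
      _ = 1 := by simp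
  have hmean_prior : ∫⁻ x : H × Ω × H, q (x.2.1, x.1) / p x.1 ∂(π.prod (ν ⊗ₘ κ)) = 1 := by
    rw [lintegral_prod_symm _ (by fun_prop)]
    simp [hmean_slice]
  have hmarkov := one_sub_le_measure_mul_le_lintegral_mul_lintegral (ρ := π.prod (ν ⊗ₘ κ))
    (f := fun x ↦ f x.2 * (p x.2.2 / q x.2)) (g := fun x ↦ q (x.2.1, x.1) / p x.1)
    (by fun_prop) (by fun_prop) δ
  rwa [hmean_posterior, hmean_prior, mul_one] at hmarkov

end ChangeOfMeasure

lemma integral_exp_pos_of_isProbabilityMeasure_tilted {H : Type*} [MeasurableSpace H]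
    {lam : Measure H} {f : H → ℝ} (h : IsProbabilityMeasure (lam.tilted f)) :
    0 < ∫ g, Real.exp (f g) ∂lam := by
  refine (integral_nonneg fun g ↦ (Real.exp_pos (f g)).le).lt_of_ne' fun hzero ↦ ?_
  refine IsProbabilityMeasure.ne_zero (lam.tilted f) ?_
  simp [Measure.tilted, hzero]

lemma ofReal_exp_mul_gibbs_density_ratio (a u u' : ℝ) {p p' Z : ℝ} (hp : 0 < p) (hp' : 0 < p')
    (hZ : 0 < Z) :
    ENNReal.ofReal (Real.exp a) * (ENNReal.ofReal p / ENNReal.ofReal (Real.exp (-u) / Z)) *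
        (ENNReal.ofReal (Real.exp (-u') / Z) / ENNReal.ofReal p') =
      ENNReal.ofReal (Real.exp (a - (u' - u + Real.log (p' / p)))) := by
  rw [← ENNReal.ofReal_div_of_pos (by positivity), ← ENNReal.ofReal_div_of_pos hp',
    ← ENNReal.ofReal_mul (by positivity), ← ENNReal.ofReal_mul (by positivity)]
  congr 1
  rw [Real.exp_sub, Real.exp_add, Real.exp_sub, Real.exp_log (by positivity), Real.exp_neg,
    Real.exp_neg]
  field_simp

lemma coe_le_coe_add_log_of_ofReal_exp_sub_le {a b : ℝ} {y : ℝ≥0∞}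
    (h : ENNReal.ofReal (Real.exp (a - b)) ≤ y) : (a : EReal) ≤ b + ENNReal.log y := by
  have hlog : (a : EReal) - b ≤ ENNReal.log y := by
    simpa only [ENNReal.log_ofReal_of_pos (Real.exp_pos _), Real.log_exp, EReal.coe_sub] using
      ENNReal.log_le_log h
  rw [add_comm (b : EReal)]
  exact (EReal.sub_le_iff_le_add (.inl (EReal.coe_ne_bot b)) (.inl (EReal.coe_ne_top b))).1 hlog

theorem gibbs_complexity_generalization_bound_general
    {Ω H : Type*} [MeasurableSpace Ω] [MeasurableSpace H]
    (ν : Measure Ω) [IsProbabilityMeasure ν] (lam : Measure H) [SFinite lam]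
    (gap : H → Ω → ℝ) (hgap : Measurable (Function.uncurry gap))
    (P : H → ℝ) (hPpos : ∀ h, 0 < P h) (hPmeas : Measurable P)
    (Pm : Measure H) [IsProbabilityMeasure Pm]
    (hPm : Pm = lam.withDensity fun h ↦ ENNReal.ofReal (P h))
    (μ : H → Ω → ℝ) (hμ : Measurable (Function.uncurry μ))
    (κ : Kernel Ω H) [IsMarkovKernel κ] (hκ : ∀ S, κ S = lam.tilted fun h ↦ -μ h S)
    (δ : ℝ) (hδ : 0 < δ) :
    1 - ENNReal.ofReal δ ≤ (Pm.prod (ν ⊗ₘ κ)) {x : H × Ω × H |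
      (gap x.2.2 x.2.1 : EReal) ≤
        ((μ x.1 x.2.1 - μ x.2.2 x.2.1 + Real.log (P x.1 / P x.2.2) : ℝ) : EReal)
          + ENNReal.log (ENNReal.ofReal (4 / δ ^ 2) *
              ∫⁻ V, ∫⁻ g, ENNReal.ofReal (Real.exp (gap g V)) ∂Pm ∂ν)} := by
  set normalizer : Ω → ℝ := fun S ↦ ∫ g, Real.exp (-μ g S) ∂lam
  have hnormalizer_pos (S : Ω) : 0 < normalizer S :=
    integral_exp_pos_of_isProbabilityMeasure_tilted (hκ S ▸ inferInstance)
  have hgap_swap : Measurable fun x : Ω × H ↦ gap x.2 x.1 := hgap.comp measurable_swap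
  have hμ_swap : Measurable fun x : Ω × H ↦ μ x.2 x.1 := hμ.comp measurable_swap
  have hnormalizer_meas : Measurable normalizer :=
    hμ_swap.neg.exp.stronglyMeasurable.integral_prod_right'.measurable
  have hδ_sq : ENNReal.ofReal (4 / δ ^ 2) = 4 / ENNReal.ofReal δ ^ 2 := by
    rw [ENNReal.ofReal_div_of_pos (by positivity), ENNReal.ofReal_pow hδ.le, ENNReal.ofReal_ofNat]
  have hratio := one_sub_le_measure_mul_density_ratio_le (ν := ν) (π := Pm) (κ := κ)
    (f := fun x ↦ ENNReal.ofReal (Real.exp (gap x.2 x.1)))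
    (q := fun x ↦ ENNReal.ofReal (Real.exp (-μ x.2 x.1) / normalizer x.1))
    hgap_swap.exp.ennreal_ofReal hPmeas.ennreal_ofReal
    (fun h ↦ (ENNReal.ofReal_pos.2 (hPpos h)).ne')
    (fun _ ↦ ENNReal.ofReal_ne_top) (by fun_prop)
    (fun x ↦ (ENNReal.ofReal_pos.2 (div_pos (Real.exp_pos _) (hnormalizer_pos x.1))).ne')
    (fun _ ↦ ENNReal.ofReal_ne_top) hPm hκ (ENNReal.ofReal δ)
  refine hratio.trans (measure_mono fun x hx ↦ coe_le_coe_add_log_of_ofReal_exp_sub_le ?_)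
  rw [hδ_sq, ← ofReal_exp_mul_gibbs_density_ratio _ _ _ (hPpos _) (hPpos _)
    (hnormalizer_pos x.2.1)]
  exact hx

section Risk

variable {H Z : Type*} [MeasurableSpace H] [MeasurableSpace Z] {ℓ : H → Z → ℝ}

lemma measurable_trueRisk (hℓ : Measurable (Function.uncurry ℓ)) (D : Measure Z) [SFinite D] :
    Measurable (trueRisk D ℓ) :=
  hℓ.stronglyMeasurable.integral_prod_right'.measurable

lemma measurable_uncurry_empRisk (hℓ : Measurable (Function.uncurry ℓ)) (m : ℕ) :
    Measurable (Function.uncurry fun (h : H) (S : Fin m → Z) ↦ empRisk ℓ h S) := by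
  refine (Finset.measurable_sum _ fun i _ ↦ ?_).div_const _
  exact hℓ.comp (measurable_fst.prodMk ((measurable_pi_apply i).comp measurable_snd))

lemma measurable_uncurry_comp_trueRisk_empRisk {φ : ℝ → ℝ → ℝ}
    (hφ : Measurable (Function.uncurry φ)) (hℓ : Measurable (Function.uncurry ℓ)) (D : Measure Z)
    [SFinite D] (m : ℕ) :
    Measurable (Function.uncurry
      fun (h : H) (S : Fin m → Z) ↦ φ (trueRisk D ℓ h) (empRisk ℓ h S)) :=
  hφ.comp (((measurable_trueRisk hℓ D).comp measurable_fst).prodMk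
    (measurable_uncurry_empRisk hℓ m))

end Risk

/-- **Main theorem: generalization bound with an arbitrary complexity measure.**
With probability at least `1−δ` over `h′ ∼ P`, `S ∼ D^m` and `h ∼ Q_S`
(where `Q_S` is the Gibbs posterior with density `exp(−μ(h,S))/Z_S`),
`φ(R_D^ℓ(h), R_S^ℓ(h)) ≤ μ(h′,S) − μ(h,S) + ln(P(h′)/P(h))
  + ln[(4/δ²) · E_{V∼D^m} E_{g∼P} e^{φ(R_D^ℓ(g), R_V^ℓ(g))}]`. -/
theorem gibbs_complexity_generalization_bound
    {Z H : Type*} [MeasurableSpace Z] [MeasurableSpace H]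
    (m : ℕ) (hm : 0 < m)
    (D : Measure Z) [IsProbabilityMeasure D]
    (lam : Measure H) [SigmaFinite lam]
    (ℓ : H → Z → ℝ) (hℓ : Measurable (Function.uncurry ℓ))
    (φ : ℝ → ℝ → ℝ) (hφ : Measurable (Function.uncurry φ))
    -- prior: strictly positive density `P` w.r.t. `lam`
    (P : H → ℝ) (hPpos : ∀ h, 0 < P h) (hPmeas : Measurable P)
    (Pm : Measure H) [IsProbabilityMeasure Pm]
    (hPm : Pm = lam.withDensity fun h => ENNReal.ofReal (P h))
    -- parametric function with finite positive Gibbs normalizer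
    (μ : H → (Fin m → Z) → ℝ) (hμ : Measurable (Function.uncurry μ))
    (hμint : ∀ S, Integrable (fun g => Real.exp (-(μ g S))) lam)
    (hZpos : ∀ S : Fin m → Z, 0 < ∫ g, Real.exp (-(μ g S)) ∂lam)
    -- the Gibbs posterior kernel
    (κ : Kernel (Fin m → Z) H) [IsMarkovKernel κ]
    (hκ : ∀ S, κ S = lam.withDensity fun h =>
      ENNReal.ofReal (Real.exp (-(μ h S)) / ∫ g, Real.exp (-(μ g S)) ∂lam))
    (δ : ℝ) (hδ : δ ∈ Set.Ioc (0:ℝ) 1) :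
    1 - ENNReal.ofReal δ ≤
      (Pm.prod (Measure.pi (fun _ : Fin m => D) ⊗ₘ κ))
        {p : H × ((Fin m → Z) × H) |
          (φ (trueRisk D ℓ p.2.2) (empRisk ℓ p.2.2 p.2.1) : EReal) ≤
            ((μ p.1 p.2.1 - μ p.2.2 p.2.1
                + Real.log (P p.1 / P p.2.2) : ℝ) : EReal)
            + ENNReal.log (ENNReal.ofReal (4/δ^2) *
                ∫⁻ V, ∫⁻ g, ENNReal.ofReal
                    (Real.exp (φ (trueRisk D ℓ g) (empRisk ℓ g V))) ∂Pm
                  ∂(Measure.pi (fun _ : Fin m => D))) } := by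
  exact gibbs_complexity_generalization_bound_general _ lam _
    (measurable_uncurry_comp_trueRisk_empRisk hφ hℓ D m) P hPpos hPmeas Pm hPm μ hμ κ hκ δ hδ.1
end
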